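/- Let X be a Polish space. Assume that for every Borel probability measure μ on the countable product ℕ → X there exists a Borel-measurable map ζ : Ω → (ℕ → X) whose law is μ. Define the indicator metric on R(X) by d_i(ξ, η) = ℙ[ξ ≠ η]. Then for ξ ∈ R(X) and a sequence (ξₙ)ₙ in R(X), lim_{n→∞} d̂_i(ξ, ξₙ) = 0 if and only if there exist ξ′ ∈ R(X) and a sequence (ξₙ′)ₙ in R(X) such that L(ξ′) = L(ξ), L(ξₙ′) = L(ξₙ) for all n, and lim_{n→∞} ℙ[ξ′ ≠ ξₙ′] = 0. -/

import Mathlib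

open MeasureTheory Filter
open scoped ENNReal Topology

/-- The minimal functional associated with `e`:
`ê(ξ, η) = inf { e(ξ′, η′) | ξ′, η′ measurable, L(ξ′) = L(ξ), L(η′) = L(η) }`. -/
noncomputable def minPM {Ω X : Type*} [MeasurableSpace Ω] [MeasurableSpace X]
    (P : Measure Ω) (e : (Ω → X) → (Ω → X) → ℝ≥0∞) (ξ η : Ω → X) : ℝ≥0∞ :=
  ⨅ (ξ' : Ω → X) (η' : Ω → X) (_ : Measurable ξ') (_ : Measurable η')
    (_ : Measure.map ξ' P = Measure.map ξ P) (_ : Measure.map η' P = Measure.map η P),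
    e ξ' η'

/-- The indicator metric on random variables: `d_i(ξ, η) = ℙ[ξ ≠ η]`. -/
noncomputable def dInd {Ω X : Type*} [MeasurableSpace Ω]
    (P : Measure Ω) (ξ η : Ω → X) : ℝ≥0∞ :=
  P {ω | ξ ω ≠ η ω}

/-!
Disintegrating each near-optimal coupling of `ξ` and `ξₙ` over its first coordinate writes it as the
law of `(x, fₙ(x, u))`, where `x` has law `L(ξ)` and `u` is uniform on `[0, 1]` and independent of
`x`. Using the same `x` and `u` for all `n` glues the couplings into one law on `ℕ → X`, which the
richness of `Ω` realizes by random variables.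
-/

open ProbabilityTheory

section Gluing

variable {α β : Type*} [MeasurableSpace α] [MeasurableSpace β]

lemma map_prodMk_prod_eq_compProd {U : Type*} [MeasurableSpace U] {ν : Measure α} [SFinite ν]
    {ρ : Measure U} [SFinite ρ] {κ : Kernel α β} [IsSFiniteKernel κ] {f : α → U → β}
    (hf : Measurable (Function.uncurry f)) (hfκ : ∀ a, ρ.map (f a) = κ a) :
    (ν.prod ρ).map (fun p => (p.1, f p.1 p.2)) = ν ⊗ₘ κ := by
  have hgraph : Measurable fun p : α × U => (p.1, f p.1 p.2) := measurable_fst.prodMk hf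
  ext s hs
  rw [Measure.map_apply hgraph hs, Measure.prod_apply (hgraph hs), Measure.compProd_apply hs]
  refine lintegral_congr fun a => ?_
  rw [← hfκ a, Measure.map_apply hf.of_uncurry_left (measurable_prodMk_left hs)]
  rfl

lemma exists_measurable_map_fst_prod_volume_eq [StandardBorelSpace β] [Nonempty β]
    (γ : Measure (α × β)) [IsFiniteMeasure γ] :
    ∃ f : α × unitInterval → β, Measurable f ∧
      (γ.fst.prod volume).map (fun p => (p.1, f p)) = γ := by
  obtain ⟨f, hf, hfκ⟩ := γ.condKernel.exists_measurable_map_eq_unitInterval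
  exact ⟨Function.uncurry f, hf,
    (map_prodMk_prod_eq_compProd hf hfκ).trans (γ.disintegrate γ.condKernel)⟩

lemma exists_measure_prod_pi_map_eq {ι : Type*} {E : ι → Type*} [∀ i, MeasurableSpace (E i)]
    [∀ i, StandardBorelSpace (E i)] [∀ i, Nonempty (E i)] {μ : Measure α} [IsFiniteMeasure μ]
    {γ : ∀ i, Measure (α × E i)} (hγ : ∀ i, (γ i).fst = μ) :
    ∃ π : Measure (α × ∀ i, E i), π.fst = μ ∧ ∀ i, π.map (fun p => (p.1, p.2 i)) = γ i := by
  have (i : ι) : IsFiniteMeasure (γ i) :=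
    ⟨by rw [← Measure.fst_univ, hγ i]; exact measure_lt_top μ Set.univ⟩
  choose f hf hfγ using fun i => exists_measurable_map_fst_prod_volume_eq (γ i)
  have hF : Measurable fun p i => f i p := measurable_pi_lambda _ hf
  refine ⟨(μ.prod volume).map fun p => (p.1, fun i => f i p), ?_, fun i => ?_⟩
  · rw [Measure.fst_map_prodMk hF]
    exact Measure.fst_prod
  · rw [Measure.map_map (by fun_prop) (measurable_fst.prodMk hF), ← hfγ i, hγ i]
    rfl

end Gluing

section MinimalFunctional

variable {Ω X : Type*} [MeasurableSpace Ω] [MeasurableSpace X] {P : Measure Ω}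
  {e : (Ω → X) → (Ω → X) → ℝ≥0∞}

lemma exists_randomVariables_map_prodMk_eq [StandardBorelSpace X]
    (hrich : ∀ μ : Measure (ℕ → X), IsProbabilityMeasure μ →
      ∃ ζ : Ω → ℕ → X, Measurable ζ ∧ Measure.map ζ P = μ)
    {μ : Measure X} [IsProbabilityMeasure μ] {γ : ℕ → Measure (X × X)}
    (hγ : ∀ n, (γ n).fst = μ) :
    ∃ (ξ : Ω → X) (ξs : ℕ → Ω → X), Measurable ξ ∧ (∀ n, Measurable (ξs n)) ∧
      ∀ n, P.map (fun ω => (ξ ω, ξs n ω)) = γ n := by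
  have : Nonempty X := nonempty_of_isProbabilityMeasure μ
  obtain ⟨π, hπμ, hπγ⟩ := exists_measure_prod_pi_map_eq hγ
  have : IsProbabilityMeasure π := ⟨by rw [← Measure.fst_univ, hπμ, measure_univ]⟩
  let cons (p : X × (ℕ → X)) (k : ℕ) : X := k.casesOn p.1 p.2
  have hcons : Measurable cons := by
    refine measurable_pi_lambda _ fun k => ?_
    cases k with
    | zero => exact measurable_fst
    | succ n => exact (measurable_pi_apply n).comp measurable_snd
  obtain ⟨ζ, hζ, hζπ⟩ := hrich (π.map cons) (Measure.isProbabilityMeasure_map hcons.aemeasurable)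
  have hζk (k : ℕ) : Measurable fun ω => ζ ω k := (measurable_pi_apply k).comp hζ
  refine ⟨fun ω => ζ ω 0, fun n ω => ζ ω (n + 1), hζk 0, fun n => hζk (n + 1), fun n => ?_⟩
  have hpair : Measurable fun z : ℕ → X => (z 0, z (n + 1)) := by fun_prop
  calc P.map (fun ω => (ζ ω 0, ζ ω (n + 1)))
      = (P.map ζ).map fun z => (z 0, z (n + 1)) := (Measure.map_map hpair hζ).symm
    _ = π.map fun p => (p.1, p.2 n) := by rw [hζπ, Measure.map_map hpair hcons]; rfl
    _ = γ n := hπγ n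

lemma minPM_le {ξ η ξ' η' : Ω → X} (hξ' : Measurable ξ') (hη' : Measurable η')
    (hξξ' : P.map ξ' = P.map ξ) (hηη' : P.map η' = P.map η) : minPM P e ξ η ≤ e ξ' η' :=
  iInf₂_le_of_le ξ' η' <| iInf₂_le_of_le hξ' hη' <| iInf₂_le hξξ' hηη'

lemma exists_le_minPM_add {ξ η : Ω → X} (hξ : Measurable ξ) (hη : Measurable η) {ε : ℝ≥0∞}
    (hε : ε ≠ 0) :
    ∃ ξ' η' : Ω → X, Measurable ξ' ∧ Measurable η' ∧ P.map ξ' = P.map ξ ∧ P.map η' = P.map η ∧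
      e ξ' η' ≤ minPM P e ξ η + ε := by
  by_cases htop : minPM P e ξ η = ⊤
  · exact ⟨ξ, η, hξ, hη, rfl, rfl, by simp [htop]⟩
  · have hlt : minPM P e ξ η < minPM P e ξ η + ε := ENNReal.lt_add_right htop hε
    conv_lhs at hlt => unfold minPM
    simp only [iInf_lt_iff] at hlt
    obtain ⟨ξ', η', hξ', hη', hξξ', hηη', hle⟩ := hlt
    exact ⟨ξ', η', hξ', hη', hξξ', hηη', hle.le⟩

/-- A functional of pairs of random variables is joint-law invariant if its value at a pair depends
only on the law of the pair. Such functionals can be transported from one coupling to another with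
the same law. Nothing is required at non-measurable functions. -/
def IsJointLawInvariant (P : Measure Ω) (e : (Ω → X) → (Ω → X) → ℝ≥0∞) : Prop :=
  ∀ ⦃ξ η ξ' η' : Ω → X⦄, Measurable ξ → Measurable η → Measurable ξ' → Measurable η' →
    P.map (fun ω => (ξ ω, η ω)) = P.map (fun ω => (ξ' ω, η' ω)) → e ξ η = e ξ' η'

lemma isJointLawInvariant_dInd [MeasurableEq X] : IsJointLawInvariant P (dInd (X := X) P) := by
  intro ξ η ξ' η' hξ hη hξ' hη' hlaw
  have hpair : IdentDistrib (fun ω => (ξ ω, η ω)) (fun ω => (ξ' ω, η' ω)) P P :=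
    ⟨(hξ.prodMk hη).aemeasurable, (hξ'.prodMk hη').aemeasurable, hlaw⟩
  exact hpair.measure_mem_eq measurableSet_diagonal.compl

lemma exists_forall_le_minPM_add [StandardBorelSpace X] [IsProbabilityMeasure P]
    (hrich : ∀ μ : Measure (ℕ → X), IsProbabilityMeasure μ →
      ∃ ζ : Ω → ℕ → X, Measurable ζ ∧ Measure.map ζ P = μ)
    (he : IsJointLawInvariant P e) {ξ : Ω → X} (hξ : Measurable ξ)
    {ξs : ℕ → Ω → X} (hξs : ∀ n, Measurable (ξs n)) {ε : ℕ → ℝ≥0∞} (hε : ∀ n, ε n ≠ 0) :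
    ∃ (ξ' : Ω → X) (ξs' : ℕ → Ω → X), Measurable ξ' ∧ (∀ n, Measurable (ξs' n)) ∧
      P.map ξ' = P.map ξ ∧ (∀ n, P.map (ξs' n) = P.map (ξs n)) ∧
      ∀ n, e ξ' (ξs' n) ≤ minPM P e ξ (ξs n) + ε n := by
  choose η θ hη hθ hηξ hθξs hle using fun n =>
    exists_le_minPM_add (P := P) (e := e) hξ (hξs n) (hε n)
  have : IsProbabilityMeasure (P.map ξ) := Measure.isProbabilityMeasure_map hξ.aemeasurable
  obtain ⟨ξ', ξs', hξ', hξs', hpair⟩ := exists_randomVariables_map_prodMk_eq hrich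
    (γ := fun n => P.map fun ω => (η n ω, θ n ω))
    fun n => (Measure.fst_map_prodMk (hθ n)).trans (hηξ n)
  refine ⟨ξ', ξs', hξ', hξs', ?_, fun n => ?_, fun n => ?_⟩
  · calc P.map ξ' = (P.map fun ω => (ξ' ω, ξs' 0 ω)).fst := (Measure.fst_map_prodMk (hξs' 0)).symm
      _ = P.map (η 0) := by rw [hpair 0, Measure.fst_map_prodMk (hθ 0)]
      _ = P.map ξ := hηξ 0
  · calc P.map (ξs' n) = (P.map fun ω => (ξ' ω, ξs' n ω)).snd := (Measure.snd_map_prodMk hξ').symm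
      _ = P.map (θ n) := by rw [hpair n, Measure.snd_map_prodMk (hη n)]
      _ = P.map (ξs n) := hθξs n
  · exact (he hξ' (hξs' n) (hη n) (hθ n) (hpair n)).trans_le (hle n)

theorem tendsto_minPM_dInd_zero_iff_general [StandardBorelSpace X] [IsProbabilityMeasure P]
    (hrich : ∀ μ : Measure (ℕ → X), IsProbabilityMeasure μ →
      ∃ ζ : Ω → ℕ → X, Measurable ζ ∧ Measure.map ζ P = μ)
    (he : IsJointLawInvariant P e) {ξ : Ω → X} (hξ : Measurable ξ)
    {ξs : ℕ → Ω → X} (hξs : ∀ n, Measurable (ξs n)) :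
    Tendsto (fun n => minPM P e ξ (ξs n)) atTop (𝓝 0) ↔
    ∃ (ξ' : Ω → X) (ξs' : ℕ → Ω → X), Measurable ξ' ∧ (∀ n, Measurable (ξs' n)) ∧
      Measure.map ξ' P = Measure.map ξ P ∧
      (∀ n, Measure.map (ξs' n) P = Measure.map (ξs n) P) ∧
      Tendsto (fun n => e ξ' (ξs' n)) atTop (𝓝 0) := by
  constructor
  · intro hmin
    obtain ⟨ξ', ξs', hξ', hξs', hlaw, hlaws, hle⟩ :=
      exists_forall_le_minPM_add hrich he hξ hξs (ε := fun n => (n : ℝ≥0∞)⁻¹) (by simp)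
    have hbound : Tendsto (fun n => minPM P e ξ (ξs n) + (n : ℝ≥0∞)⁻¹) atTop (𝓝 0) := by
      simpa using hmin.add ENNReal.tendsto_inv_nat_nhds_zero
    exact ⟨ξ', ξs', hξ', hξs', hlaw, hlaws,
      tendsto_of_tendsto_of_tendsto_of_le_of_le tendsto_const_nhds hbound (fun _ => zero_le) hle⟩
  · rintro ⟨ξ', ξs', hξ', hξs', hlaw, hlaws, hlim⟩
    exact tendsto_of_tendsto_of_tendsto_of_le_of_le tendsto_const_nhds hlim (fun _ => zero_le)
      fun n => minPM_le hξ' (hξs' n) hlaw (hlaws n)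

end MinimalFunctional

/-- On a Polish space `X`, assuming every Borel probability measure
on `ℕ → X` is the law of some random variable, `d̂_i(ξ, ξₙ) → 0` iff there exist
representatives `ξ′, (ξₙ′)ₙ` with `L(ξ′) = L(ξ)`, `L(ξₙ′) = L(ξₙ)` and
`ℙ[ξ′ ≠ ξₙ′] → 0`. -/
theorem tendsto_minPM_dInd_zero_iff
    {Ω X : Type*} [MeasurableSpace Ω]
    [TopologicalSpace X] [PolishSpace X] [MeasurableSpace X] [BorelSpace X]
    (P : Measure Ω) [IsProbabilityMeasure P]
    (hrich : ∀ μ : Measure (ℕ → X), IsProbabilityMeasure μ →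
      ∃ ζ : Ω → ℕ → X, Measurable ζ ∧ Measure.map ζ P = μ)
    (ξ : Ω → X) (hξ : Measurable ξ)
    (ξs : ℕ → Ω → X) (hξs : ∀ n, Measurable (ξs n)) :
    Tendsto (fun n => minPM P (dInd P) ξ (ξs n)) atTop (𝓝 0) ↔
    ∃ (ξ' : Ω → X) (ξs' : ℕ → Ω → X), Measurable ξ' ∧ (∀ n, Measurable (ξs' n)) ∧
      Measure.map ξ' P = Measure.map ξ P ∧
      (∀ n, Measure.map (ξs' n) P = Measure.map (ξs n) P) ∧
      Tendsto (fun n => P {ω | ξ' ω ≠ ξs' n ω}) atTop (𝓝 0) :=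
  tendsto_minPM_dInd_zero_iff_general hrich isJointLawInvariant_dInd hξ hξs
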